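/- Let Q, R, H and K be as in the Kalman gain setup. Then (I − K H) Q (K H)ᵀ = K R Kᵀ. Consequently, the choice Bᵗ = I − K H and Sᵗ = (I − K H) Q (K H)ᵀ makes the noise covariance Sᵗ in the linear update x̃ = Bᵗ(x − μ) + μ + K(y − Hμ) + ε̃ equal to the covariance K R Kᵀ of the perturbation term K ε of the stochastic ensemble Kalman filter update. -/

import Mathlib

open Matrix

theorem posDef_mul_mul_conjTranspose_add {m n α : Type*} [Finite m] [Fintype n] [Ring α]
    [PartialOrder α] [StarRing α] [AddLeftMono α] {Q : Matrix n n α} {R : Matrix m m α}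
    (hQ : Q.PosSemidef) (hR : R.PosDef) (H : Matrix m n α) : (H * Q * Hᴴ + R).PosDef :=
  PosDef.posSemidef_add (hQ.mul_mul_conjTranspose_same H) hR

section Gain

variable {m n p α : Type*} [Fintype m] [Fintype n] [DecidableEq n]

theorem one_sub_mul_mul_eq_mul_iff [Ring α] {K : Matrix n m α} {H : Matrix m n α}
    {P : Matrix n p α} {R : Matrix m p α} :
    (1 - K * H) * P = K * R ↔ K * (H * P + R) = P := by
  rw [Matrix.sub_mul, Matrix.one_mul, Matrix.mul_assoc, sub_eq_iff_eq_add', Matrix.mul_add,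
    eq_comm]

theorem stmt_9_general [DecidableEq m] [CommRing α] {Q : Matrix n n α} {R : Matrix m m α}
    {H : Matrix m n α} {K : Matrix n m α} (hS : IsUnit (H * Q * Hᵀ + R))
    (hK : K = Q * Hᵀ * (H * Q * Hᵀ + R)⁻¹) :
    (1 - K * H) * Q * (K * H)ᵀ = K * R * Kᵀ := by
  have gain_equation : K * (H * (Q * Hᵀ) + R) = Q * Hᵀ := by
    rw [← Matrix.mul_assoc, hK,
      nonsing_inv_mul_cancel_right _ _ ((isUnit_iff_isUnit_det _).mp hS)]
  calc (1 - K * H) * Q * (K * H)ᵀ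
      = (1 - K * H) * (Q * Hᵀ) * Kᵀ := by simp only [transpose_mul, Matrix.mul_assoc]
    _ = K * R * Kᵀ := by rw [one_sub_mul_mul_eq_mul_iff.mpr gain_equation]

end Gain

/-- In the Kalman gain setup,
`(I − K H) Q (K H)ᵀ = K R Kᵀ`; i.e. with `Bᵗ = I − K H` and
`Sᵗ = (I − K H) Q (K H)ᵀ`, the noise covariance `Sᵗ` equals the covariance
`K R Kᵀ` of the perturbation term of the stochastic EnKF update. -/
theorem stmt_9 (n m : ℕ) (hn : 0 < n) (hm : 0 < m)
    (Q : Matrix (Fin n) (Fin n) ℝ) (R : Matrix (Fin m) (Fin m) ℝ)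
    (H : Matrix (Fin m) (Fin n) ℝ) (K : Matrix (Fin n) (Fin m) ℝ)
    (hQ : Q.PosDef) (hR : R.PosDef)
    (hK : K = Q * Hᵀ * (H * Q * Hᵀ + R)⁻¹) :
    (1 - K * H) * Q * (K * H)ᵀ = K * R * Kᵀ := by
  have hS := posDef_mul_mul_conjTranspose_add hQ.posSemidef hR H
  rw [conjTranspose_eq_transpose_of_trivial] at hS
  exact stmt_9_general hS.isUnit hK
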